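/- Let b₄⁻ ∈ [0, 1/2) be the root of the fourth Bernoulli polynomial B₄ in that interval, and suppose 0 < a ≤ b₄⁻. Then ζ(σ, a) > 0 for every real σ with −4 < σ < −3. -/

import Mathlib

open HurwitzZeta Polynomial Set

/-- The `n`-th Bernoulli polynomial evaluated at a real number. -/
noncomputable def bernoulliPoly (n : ℕ) (x : ℝ) : ℝ := Polynomial.aeval x (Polynomial.bernoulli n)

lemma tail_bound (f : ℕ → ℝ) (A c : ℝ) (hf : HasSum f A) (h0 : f 0 = 0) (hc : 0 ≤ c)
    (hb : ∀ n : ℕ, 2 ≤ n → |f n| ≤ c * (1 / (n : ℝ) ^ 3)) : |A - f 1| ≤ c / 3 := by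
  have h1 := (hasSum_nat_add_iff' 2).mpr hf
  have h2 := (hasSum_nat_add_iff' 2).mpr hasSum_zeta_two
  simp only [Finset.sum_range_succ, Finset.sum_range_zero, h0] at h1 h2
  have h3 := h2.mul_left (c / 2)
  have hle : ∀ n : ℕ, ‖f (n + 2)‖ ≤ c / 2 * (1 / ((n + 2 : ℕ) : ℝ) ^ 2) := by
    intro n
    refine (hb (n + 2) (by omega)).trans ?_
    have hn : (2 : ℝ) ≤ ((n + 2 : ℕ) : ℝ) := by push_cast; linarith [n.cast_nonneg (α := ℝ)]
    generalize ((n + 2 : ℕ) : ℝ) = m at hn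
    have hm : 0 < m := by linarith
    have : 1 / m ^ 3 ≤ 1 / 2 * (1 / m ^ 2) := by
      rw [one_div_mul_one_div_rev]
      apply one_div_le_one_div_of_le (by positivity)
      nlinarith [pow_pos hm 2]
    calc c * (1 / m ^ 3) ≤ c * (1 / 2 * (1 / m ^ 2)) := by gcongr
      _ = _ := by ring
  have h4 := tsum_of_norm_bounded h3 hle
  rw [h1.tsum_eq, Real.norm_eq_abs] at h4
  have hpi : Real.pi ^ 2 ≤ 10 := by
    have := Real.pi_lt_d2
    nlinarith [Real.pi_pos]
  have e : A - (0 + 0 + f 1) = A - f 1 := by ring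
  rw [e] at h4
  refine h4.trans ?_
  norm_num
  nlinarith

lemma abs_sin_mul_nat_le (x : ℝ) (hx : 0 ≤ Real.sin x) (n : ℕ) :
    |Real.sin (x * n)| ≤ n * Real.sin x := by
  induction n with
  | zero => simp
  | succ k ih =>
    have : x * ((k + 1 : ℕ) : ℝ) = x * k + x := by push_cast; ring
    rw [this, Real.sin_add]
    refine (abs_add_le _ _).trans ?_
    rw [abs_mul, abs_mul, abs_of_nonneg hx]
    push_cast
    nlinarith [Real.abs_cos_le_one x, Real.abs_cos_le_one (x * k), abs_nonneg (Real.sin (x * k))]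

lemma rpow_diff_bound (m s : ℝ) (hm : 1 ≤ m) (hs : 4 ≤ s) :
    |1 / m ^ s - 1 / m ^ (4 : ℕ)| ≤ (s - 4) * (1 / m ^ 3) := by
  have hm0 : 0 < m := by linarith
  have e : 1 / m ^ s = 1 / m ^ (4 : ℕ) * Real.exp (-((s - 4) * Real.log m)) := by
    rw [one_div, ← Real.rpow_neg hm0.le, show -s = -(4 : ℕ) + -(s - 4) by push_cast; ring,
      Real.rpow_add hm0, Real.rpow_neg hm0.le, Real.rpow_natCast, one_div,
      Real.rpow_def_of_pos hm0]
    congr 2; ring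
  have hl0 : 0 ≤ Real.log m := Real.log_nonneg hm
  have hl1 : Real.log m ≤ m := by linarith [Real.log_le_sub_one_of_pos hm0]
  have h1 := Real.add_one_le_exp (-((s - 4) * Real.log m))
  have h2 : Real.exp (-((s - 4) * Real.log m)) ≤ 1 := by
    apply Real.exp_le_one_iff.mpr
    have : 0 ≤ (s - 4) * Real.log m := mul_nonneg (by linarith) hl0
    linarith
  have e2 : (s - 4) * (1 / m ^ 3) = 1 / m ^ (4 : ℕ) * ((s - 4) * m) := by
    field_simp
  rw [e, e2]
  have hp : 0 < 1 / m ^ (4 : ℕ) := by positivity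
  generalize 1 / m ^ (4 : ℕ) = P at *
  rw [abs_le]
  have h3 : (s - 4) * Real.log m ≤ (s - 4) * m := mul_le_mul_of_nonneg_left hl1 (by linarith)
  have h4 : 0 ≤ (s - 4) * m := mul_nonneg (by linarith) hm0.le
  constructor <;> nlinarith

lemma rpow_le_bound (m s : ℝ) (hm : 1 ≤ m) (hs : 4 ≤ s) :
    1 / m ^ s ≤ 1 / m ^ 4 := by
  apply one_div_le_one_div_of_le (by positivity)
  rw [← Real.rpow_natCast]
  exact Real.rpow_le_rpow_of_exponent_le hm (by exact_mod_cast hs)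

lemma bernoulliPoly_four (x : ℝ) : bernoulliPoly 4 x = (x * (1 - x)) ^ 2 - 1 / 30 := by
  have h4 : _root_.bernoulli 4 = -1 / 30 := by
    rw [bernoulli_eq_bernoulli'_of_ne_one (by decide), bernoulli'_four]
  have h3 : _root_.bernoulli 3 = 0 := by
    rw [bernoulli_eq_bernoulli'_of_ne_one (by decide), bernoulli'_three]
  have c2 : Nat.choose 4 2 = 6 := rfl
  have c3 : Nat.choose 4 3 = 4 := rfl
  simp [bernoulliPoly, Polynomial.bernoulli, Finset.sum_range_succ, h4, h3,
    bernoulli_two, aeval_monomial, c2, c3]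
  ring

lemma real_hasSum_cos (a s : ℝ) (hs : 4 ≤ s) : ∃ C : ℝ, cosZeta (a : UnitAddCircle) (s : ℂ) = C ∧
    HasSum (fun n : ℕ ↦ Real.cos (2 * Real.pi * a * n) / (n : ℝ) ^ s) C := by
  have h := hasSum_nat_cosZeta a (s := (s : ℂ)) (by simp; linarith)
  have e : (fun n : ℕ ↦ (Real.cos (2 * Real.pi * a * n) : ℂ) / (n : ℂ) ^ (s : ℂ)) =
      fun n : ℕ ↦ ((Real.cos (2 * Real.pi * a * n) / (n : ℝ) ^ s : ℝ) : ℂ) := by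
    funext n
    rw [Complex.ofReal_div, Complex.ofReal_cpow n.cast_nonneg]
    simp
  rw [e] at h
  have h' := Complex.hasSum_re h
  have hr := Complex.hasSum_ofReal.mpr h'
  exact ⟨_, h.unique hr, h'⟩

lemma real_hasSum_sin (a s : ℝ) (hs : 4 ≤ s) : ∃ C : ℝ, sinZeta (a : UnitAddCircle) (s : ℂ) = C ∧
    HasSum (fun n : ℕ ↦ Real.sin (2 * Real.pi * a * n) / (n : ℝ) ^ s) C := by
  have h := hasSum_nat_sinZeta a (s := (s : ℂ)) (by simp; linarith)
  have e : (fun n : ℕ ↦ (Real.sin (2 * Real.pi * a * n) : ℂ) / (n : ℂ) ^ (s : ℂ)) =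
      fun n : ℕ ↦ ((Real.sin (2 * Real.pi * a * n) / (n : ℝ) ^ s : ℝ) : ℂ) := by
    funext n
    rw [Complex.ofReal_div, Complex.ofReal_cpow n.cast_nonneg]
    simp
  rw [e] at h
  have h' := Complex.hasSum_re h
  have hr := Complex.hasSum_ofReal.mpr h'
  exact ⟨_, h.unique hr, h'⟩

lemma cos_four (a : ℝ) (h0 : 0 ≤ a) (h1 : a ≤ 1) (hB : bernoulliPoly 4 a ≤ 0) :
    ∃ D : ℝ, 0 ≤ D ∧ HasSum (fun n : ℕ ↦ Real.cos (2 * Real.pi * a * n) / (n : ℝ) ^ 4) D := by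
  have h := hasSum_one_div_nat_pow_mul_cos (k := 2) (by norm_num) (x := a) ⟨h0, h1⟩
  refine ⟨_, ?_, h.congr_fun ?_⟩
  · have : (Polynomial.map (algebraMap ℚ ℝ) (Polynomial.bernoulli (2 * 2))).eval a
        = bernoulliPoly 4 a := by
      rw [bernoulliPoly, Polynomial.eval_map_algebraMap]
    rw [this]
    have hp : 0 ≤ (2 * Real.pi) ^ (2 * 2) / 2 / ((2 * 2).factorial : ℝ) := by positivity
    have := mul_nonneg hp (neg_nonneg.mpr hB)
    calc (0 : ℝ) ≤ _ := this
      _ = _ := by ring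
  · intro n
    rw [show 2 * Real.pi * a * n = 2 * Real.pi * n * a by ring]
    ring

lemma core (a s : ℝ) (h0 : 0 < a) (h1 : a < 1 / 2) (hB : bernoulliPoly 4 a ≤ 0)
    (hs : 4 < s) (hs' : s < 5) (C S : ℝ)
    (hC : HasSum (fun n : ℕ ↦ Real.cos (2 * Real.pi * a * n) / (n : ℝ) ^ s) C)
    (hS : HasSum (fun n : ℕ ↦ Real.sin (2 * Real.pi * a * n) / (n : ℝ) ^ s) S) :
    0 < Real.cos (Real.pi * s / 2) * C + Real.sin (Real.pi * s / 2) * S := by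
  obtain ⟨D, hD0, hD⟩ := cos_four a h0.le (by linarith) hB
  have hpi := Real.pi_pos
  set x := 2 * Real.pi * a with hx
  have hx0 : 0 < x := by positivity
  have hxpi : x < Real.pi := by rw [hx]; nlinarith
  have hsin : 0 < Real.sin x := Real.sin_pos_of_pos_of_lt_pi hx0 hxpi
  have hs0 : s ≠ 0 := by linarith
  have key : ∀ n : ℕ, 2 ≤ n → (1 : ℝ) ≤ n := fun n hn ↦ by exact_mod_cast (by omega : 1 ≤ n)
  have bC := tail_bound _ C 1 hC (by simp [Real.zero_rpow hs0]) (by norm_num) (by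
    intro n hn
    have hn' := key n hn
    have hp : 0 < (n : ℝ) ^ s := by positivity
    rw [abs_div, abs_of_pos hp]
    have a1 : |Real.cos (x * n)| / (n : ℝ) ^ s ≤ 1 / (n : ℝ) ^ s := by
      gcongr; exact Real.abs_cos_le_one _
    have a2 := rpow_le_bound n s hn' hs.le
    have a3 : 1 / (n : ℝ) ^ 4 ≤ 1 / (n : ℝ) ^ 3 := by
      apply one_div_le_one_div_of_le (by positivity)
      exact pow_le_pow_right₀ hn' (by norm_num)
    linarith)
  have bD4 := tail_bound _ D 1 hD (by simp) (by norm_num) (by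
    intro n hn
    have hn' := key n hn
    have hp : 0 < (n : ℝ) ^ 4 := by positivity
    rw [abs_div, abs_of_pos hp]
    have a1 : |Real.cos (x * n)| / (n : ℝ) ^ 4 ≤ 1 / (n : ℝ) ^ 4 := by
      gcongr; exact Real.abs_cos_le_one _
    have a3 : 1 / (n : ℝ) ^ 4 ≤ 1 / (n : ℝ) ^ 3 := by
      apply one_div_le_one_div_of_le (by positivity)
      exact pow_le_pow_right₀ hn' (by norm_num)
    linarith)
  have bS := tail_bound _ S (Real.sin x) hS (by simp) hsin.le (by
    intro n hn
    have hn' := key n hn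
    have hp : 0 < (n : ℝ) ^ s := by positivity
    rw [abs_div, abs_of_pos hp, div_eq_mul_one_div]
    have a2 := rpow_le_bound n s hn' hs.le
    calc |Real.sin (x * n)| * (1 / (n : ℝ) ^ s) ≤ (n * Real.sin x) * (1 / (n : ℝ) ^ 4) := by
          gcongr
          exact abs_sin_mul_nat_le x hsin.le n
      _ = _ := by field_simp)
  have bD := tail_bound _ (C - D) (s - 4) (hC.sub hD) (by simp [Real.zero_rpow hs0])
    (by linarith) (by
    intro n hn
    have hn' := key n hn
    have a1 := rpow_diff_bound n s hn' hs.le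
    rw [div_eq_mul_one_div, div_eq_mul_one_div (Real.cos (x * n)) ((n : ℝ) ^ 4), ← mul_sub, abs_mul]
    have := mul_le_mul_of_nonneg_right (Real.abs_cos_le_one (x * n))
      (abs_nonneg (1 / (n : ℝ) ^ s - 1 / (n : ℝ) ^ 4))
    linarith)
  simp only [Nat.cast_one, mul_one, Real.one_rpow, one_pow, div_one, sub_self, sub_zero] at bC bS bD bD4
  rw [abs_le] at bC bS bD bD4
  set θ := Real.pi * (s - 4) / 2 with hθ
  have hθe : Real.pi * s / 2 = θ + 2 * Real.pi := by rw [hθ]; ring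
  rw [hθe, Real.cos_add_two_pi, Real.sin_add_two_pi]
  have hθ0 : 0 < θ := by
    have : 0 < s - 4 := by linarith
    positivity
  have hθ1 : θ < Real.pi / 2 := by rw [hθ]; nlinarith
  have hcosθ : 0 < Real.cos θ := Real.cos_pos_of_mem_Ioo ⟨by linarith, hθ1⟩
  have hsinθ : 0 < Real.sin θ := Real.sin_pos_of_pos_of_lt_pi hθ0 (by linarith)
  have hSpos : 0 < S := by linarith
  by_cases hc : 1 / 3 < Real.cos x
  · have : 0 < C := by linarith
    positivity
  · push Not at hc
    rcases lt_or_ge 0 C with hCp | hCn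
    · positivity
    have hcl : -(1 / 3) ≤ Real.cos x ∨ Real.cos x < -(1 / 3) := le_or_gt _ _
    have hSb : 1 / 2 ≤ S := by
      rcases hcl with hcl | hcl
      · nlinarith [Real.sin_sq_add_cos_sq x]
      · exfalso
        linarith
    have ht := Real.lt_tan hθ0 hθ1
    rw [Real.tan_eq_sin_div_cos, lt_div_iff₀ hcosθ] at ht
    have hCl : -((s - 4) / 3) ≤ C := by linarith
    have h3 := Real.pi_gt_three
    have q1 : (s - 4) / 3 < θ * (1 / 2) := by rw [hθ]; nlinarith
    have q2 : θ * Real.cos θ * (1 / 2) < Real.sin θ * S := by nlinarith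
    nlinarith

theorem hurwitzZeta_pos_on_Ioo_neg_four_neg_three (bm : ℝ)
    (hbm : bm ∈ Set.Ico (0 : ℝ) (1 / 2)) (hbm0 : bernoulliPoly 4 bm = 0)
    (a : ℝ) (ha : 0 < a) (ha' : a ≤ bm) :
    ∀ σ : ℝ, -4 < σ → σ < -3 →
      (hurwitzZeta (a : UnitAddCircle) (σ : ℂ)).im = 0 ∧
        0 < (hurwitzZeta (a : UnitAddCircle) (σ : ℂ)).re := by
  intro σ h1 h2
  obtain ⟨hb0, hb1⟩ := hbm
  have hB : bernoulliPoly 4 a ≤ 0 := by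
    rw [bernoulliPoly_four] at hbm0 ⊢
    have : a * (1 - a) ≤ bm * (1 - bm) := by nlinarith
    have h3 : 0 ≤ a * (1 - a) := mul_nonneg ha.le (by linarith)
    nlinarith
  obtain ⟨s, rfl⟩ : ∃ s, σ = 1 - s := ⟨1 - σ, by ring⟩
  have hs : 4 < s := by linarith
  have hs' : s < 5 := by linarith
  obtain ⟨C, hC, hC'⟩ := real_hasSum_cos a s hs.le
  obtain ⟨S, hS, hS'⟩ := real_hasSum_sin a s hs.le
  have hpos := core a s ha (by linarith) hB hs hs' C S hC' hS'
  have hn : ∀ n : ℕ, (s : ℂ) ≠ -n := by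
    intro n h
    have : s = -(n : ℝ) := by exact_mod_cast h
    linarith [n.cast_nonneg (α := ℝ)]
  have hne : (s : ℂ) ≠ 1 := by
    intro h
    have : s = 1 := by exact_mod_cast h
    linarith
  have hz : hurwitzZeta (a : UnitAddCircle) ((1 - s : ℝ) : ℂ) =
      ((2 * (2 * Real.pi) ^ (-s) * Real.Gamma s *
        (Real.cos (Real.pi * s / 2) * C + Real.sin (Real.pi * s / 2) * S) : ℝ) : ℂ) := by
    rw [Complex.ofReal_sub, Complex.ofReal_one, hurwitzZeta, hurwitzZetaEven_one_sub _ hn (Or.inr hne),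
      hurwitzZetaOdd_one_sub _ hn, hC, hS]
    have hg : Complex.Gamma s = (Real.Gamma s : ℂ) := Complex.Gamma_ofReal s
    rw [hg]
    push_cast
    rw [Complex.ofReal_cpow (by positivity)]
    push_cast
    ring
  rw [hz]
  refine ⟨Complex.ofReal_im _, ?_⟩
  rw [Complex.ofReal_re]
  have := Real.Gamma_pos_of_pos (show 0 < s by linarith)
  have := Real.pi_pos
  positivity
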